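/- arXiv:0803.3288 — 3 statements merged into one kernel-verified Lean document; each statement's English description precedes it below -/
import Mathlib

section
/- Let α ∈ (1/3, 1/2), c₁, c₂ > 0, and let I be a bounded interval of ℝ₊. With q_n = n^α and b_n = n^α c_n where c_{2n-1} = c₁, c_{2n} = c₂, and with F_n(λ) the Poincaré coefficient F_n(λ) = (q_{2n+2}−λ)b_{2n}²/((q_{2n}−λ)b_{2n+1}b_{2n+2}) − (q_{2n+1}−λ)(q_{2n+2}−λ)/(b_{2n+1}b_{2n+2}) + b_{2n+1}/b_{2n+2}, assuming |c₁ − c₂| = 1, one has the uniform expansion F_n(λ) = 2 + (2^{1-α}/(c₁c₂))·λ·n^{-α} − (2^{-2α}/(c₁c₂))·λ²·n^{-2α} − (α/n)·(1 + 1/(2c₁c₂)) + Õ_I(n^{-1-α}) as n → ∞. -/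
/-- Uniform big-O on `I`: `r_n(λ) = Õ_I(h_n)`. -/
def OtildeI (I : Set ℝ) (r : ℕ → ℝ → ℝ) (h : ℕ → ℝ) : Prop :=
  ∃ C > (0 : ℝ), ∃ N : ℕ, ∀ n > N, ∀ t ∈ I, |r n t| ≤ C * |h n|

/-- The 2-periodically modulated weights `b_n = n^α c_n`, `c_{2n-1} = c₁`, `c_{2n} = c₂`. -/
noncomputable def jacobiWeight (α c₁ c₂ : ℝ) (n : ℕ) : ℝ :=
  (n : ℝ) ^ α * (if Odd n then c₁ else c₂)

/-- The diagonal `q_n = n^α`. -/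
noncomputable def jacobiDiag (α : ℝ) (n : ℕ) : ℝ := (n : ℝ) ^ α

/-- The Poincaré coefficient `F_n(λ)`. -/
noncomputable def jacobiF (b q : ℕ → ℝ) (n : ℕ) (t : ℝ) : ℝ :=
  (q (2 * n + 2) - t) * (b (2 * n)) ^ 2 / ((q (2 * n) - t) * b (2 * n + 1) * b (2 * n + 2)) -
    (q (2 * n + 1) - t) * (q (2 * n + 2) - t) / (b (2 * n + 1) * b (2 * n + 2)) +
    b (2 * n + 1) / b (2 * n + 2)

/-- Second-order lower Bernoulli bound for exponents in `[0, 1]`. -/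
theorem one_add_mul_sub_sq_le_rpow {a x : ℝ} (ha₀ : 0 ≤ a) (ha₁ : a ≤ 1) (hx : 0 ≤ x) :
    1 + a * x - x ^ 2 ≤ (1 + x) ^ a := by
  have hpos : 0 < (1 + x) ^ (1 - a) := Real.rpow_pos_of_pos (by linarith) _
  have hb : (1 + x) ^ (1 - a) ≤ 1 + (1 - a) * x :=
    rpow_one_add_le_one_add_mul_self (by linarith) (by linarith) (by linarith)
  have hprod : (1 + x) ^ a * (1 + x) ^ (1 - a) = 1 + x := by
    rw [← Real.rpow_add (by linarith)]
    simp
  by_contra! hlt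
  have h₁ : 1 + x ≤ (1 + x) ^ a * (1 + (1 - a) * x) := by
    calc 1 + x = (1 + x) ^ a * (1 + x) ^ (1 - a) := hprod.symm
      _ ≤ _ := by gcongr
  have hfac : 0 < 1 + (1 - a) * x := by nlinarith
  have h₂ : 1 + x < (1 + a * x - x ^ 2) * (1 + (1 - a) * x) :=
    h₁.trans_lt (mul_lt_mul_of_pos_right hlt hfac)
  nlinarith [pow_nonneg hx 3, mul_nonneg (sub_nonneg.2 ha₁) (pow_nonneg hx 3),
    mul_nonneg (mul_nonneg ha₀ (sub_nonneg.2 ha₁)) (sq_nonneg x), sq_nonneg (a * x),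
    mul_nonneg (sub_nonneg.2 ha₁) (sq_nonneg x), mul_nonneg ha₀ (sq_nonneg x)]

theorem abs_div_le_of_one_le {a b K : ℝ} (hb : 1 ≤ b) (ha : |a| ≤ K) : |a / b| ≤ K := by
  rw [abs_div, abs_of_pos (by linarith : 0 < b)]
  exact (div_le_self (abs_nonneg a) hb).trans ha

/-- The remainder of the Poincaré coefficient in terms of the ratios `r₁`, `r₂` of consecutive
powers and of the rescaled spectral parameter `s`. -/
theorem abs_poincare_remainder_le {c₁ c₂ r₁ r₂ s y d : ℝ} (hc₁ : 0 < c₁) (hc₂ : 0 < c₂)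
    (hy₀ : 0 ≤ y) (hy₁ : y ≤ 1) (hd₀ : 0 ≤ d) (hd : d ≤ y) (hs₀ : 0 ≤ s) (hs : s ≤ 1 / 2)
    (hr₁ : 1 ≤ r₁) (hr₂ : 1 ≤ r₂) (hu₁ : r₁ ≤ 1 + d) (hl₁ : 1 + d - y ^ 2 ≤ r₁)
    (hu₂ : r₂ ≤ 1 + 2 * d) (hl₂ : 1 + 2 * d - 4 * y ^ 2 ≤ r₂) :
    |c₂ / c₁ * ((r₂ - s) / ((1 - s) * r₁ * r₂) - 1 + d) -
        1 / (c₁ * c₂) * ((r₁ - s) * (r₂ - s) / (r₁ * r₂) - (1 - s) ^ 2) +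
        c₁ / c₂ * (r₁ / r₂ - 1 + d)| ≤
      (c₂ / c₁ + 1 / (c₁ * c₂) + c₁ / c₂) * (7 * (y ^ 2 + s * y)) := by
  have hsy : 0 ≤ s * y := mul_nonneg hs₀ hy₀
  have hyy : 0 ≤ y ^ 2 := sq_nonneg y
  have hdd : d ^ 2 ≤ y ^ 2 := by gcongr
  have hd1 : 0 ≤ 1 - d := by linarith
  have hrr : 1 ≤ r₁ * r₂ := one_le_mul_of_one_le_of_one_le hr₁ hr₂
  have hA : |(r₂ - s) / ((1 - s) * r₁ * r₂) - 1 + d| ≤ 7 * (y ^ 2 + s * y) := by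
    have h : (r₂ - s) / ((1 - s) * r₁ * r₂) - 1 + d =
        (1 - (1 - d) * r₁) / r₁ + s * (r₂ - 1) / (1 - s) / (r₁ * r₂) := by
      have : 1 - s ≠ 0 := by linarith
      have : r₁ ≠ 0 := by linarith
      have : r₂ ≠ 0 := by linarith
      field_simp
      ring
    have h₁ : |(1 - (1 - d) * r₁) / r₁| ≤ 2 * y ^ 2 := by
      refine abs_div_le_of_one_le hr₁ (abs_le.2 ⟨?_, ?_⟩)
      · nlinarith [mul_le_mul_of_nonneg_left hu₁ hd1]
      · nlinarith [mul_le_mul_of_nonneg_left hl₁ hd1, mul_nonneg hd₀ hyy]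
    have h₂ : |s * (r₂ - 1) / (1 - s) / (r₁ * r₂)| ≤ 4 * (s * y) := by
      refine abs_div_le_of_one_le hrr ?_
      rw [abs_of_nonneg (div_nonneg (mul_nonneg hs₀ (by linarith)) (by linarith)),
        div_le_iff₀ (by linarith)]
      nlinarith [mul_le_mul_of_nonneg_left (by linarith : r₂ - 1 ≤ 2 * y) hs₀,
        mul_nonneg hsy (by linarith : 0 ≤ 1 / 2 - s)]
    rw [h]
    refine (abs_add_le _ _).trans ?_
    linarith
  have hB : |(r₁ - s) * (r₂ - s) / (r₁ * r₂) - (1 - s) ^ 2| ≤ 7 * (y ^ 2 + s * y) := by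
    have h : (r₁ - s) * (r₂ - s) / (r₁ * r₂) - (1 - s) ^ 2 =
        s * ((r₁ - 1) * r₂ + (r₂ - 1) * r₁ - s * (r₁ * r₂ - 1)) / (r₁ * r₂) := by
      have : r₁ ≠ 0 := by linarith
      have : r₂ ≠ 0 := by linarith
      field_simp
      ring
    have hnum : 0 ≤ (r₁ - 1) * r₂ + (r₂ - 1) * r₁ - s * (r₁ * r₂ - 1) := by
      nlinarith [mul_nonneg (by linarith : 0 ≤ 1 - s) (by linarith : 0 ≤ r₁ * r₂ - 1),
        mul_nonneg (by linarith : 0 ≤ r₁ - 1) (by linarith : 0 ≤ r₂ - 1)]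
    have hle : (r₁ - 1) * r₂ + (r₂ - 1) * r₁ - s * (r₁ * r₂ - 1) ≤ 7 * y * (r₁ * r₂) := by
      have h₁ : (r₁ - 1) * r₂ ≤ y * (r₁ * r₂) := by
        nlinarith [mul_le_mul_of_nonneg_right (by linarith : r₁ - 1 ≤ y) (by linarith : 0 ≤ r₂),
          mul_nonneg (mul_nonneg hy₀ (by linarith : 0 ≤ r₁ - 1)) (by linarith : 0 ≤ r₂)]
      have h₂ : (r₂ - 1) * r₁ ≤ 2 * y * (r₁ * r₂) := by
        nlinarith [mul_le_mul_of_nonneg_right (by linarith : r₂ - 1 ≤ 2 * y)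
            (by linarith : 0 ≤ r₁),
          mul_nonneg (mul_nonneg hy₀ (by linarith : 0 ≤ r₂ - 1)) (by linarith : 0 ≤ r₁)]
      nlinarith [mul_nonneg hs₀ (by linarith : 0 ≤ r₁ * r₂ - 1),
        mul_nonneg hy₀ (by linarith : 0 ≤ r₁ * r₂)]
    rw [h, abs_of_nonneg (div_nonneg (mul_nonneg hs₀ hnum) (by linarith)),
      div_le_iff₀ (by linarith)]
    nlinarith [mul_le_mul_of_nonneg_left hle hs₀, mul_nonneg hyy (by linarith : 0 ≤ r₁ * r₂)]
  have hC : |r₁ / r₂ - 1 + d| ≤ 7 * (y ^ 2 + s * y) := by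
    have h : r₁ / r₂ - 1 + d = (r₁ - (1 - d) * r₂) / r₂ := by
      have : r₂ ≠ 0 := by linarith
      field_simp
      ring
    rw [h]
    refine abs_div_le_of_one_le hr₂ (abs_le.2 ⟨?_, ?_⟩)
    · nlinarith [mul_le_mul_of_nonneg_left hu₂ hd1]
    · nlinarith [mul_le_mul_of_nonneg_left hl₂ hd1, mul_nonneg hd₀ hyy]
  refine (abs_add_le _ _).trans ?_
  refine (add_le_add_left (abs_sub _ _) _).trans ?_
  rw [abs_mul, abs_mul, abs_mul, abs_of_pos (div_pos hc₂ hc₁), abs_of_pos (div_pos hc₁ hc₂),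
    abs_of_pos (by positivity : 0 < 1 / (c₁ * c₂)), add_mul, add_mul]
  gcongr

/-- Rewriting of the remainder of `F_n(λ)` in ratio variables, with `x = (2n)^α`. -/
theorem jacobiF_sub_eq_ratio {c₁ c₂ x r₁ r₂ t d : ℝ} (hc₁ : 0 < c₁) (hc₂ : 0 < c₂)
    (hcrit : c₁ ^ 2 + c₂ ^ 2 - 1 = 2 * c₁ * c₂) (hx : 0 < x) (hxt : x - t ≠ 0)
    (hr₁ : 0 < r₁) (hr₂ : 0 < r₂) :
    (x * r₂ - t) * (x * c₂) ^ 2 / ((x - t) * (x * r₁ * c₁) * (x * r₂ * c₂)) -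
          (x * r₁ - t) * (x * r₂ - t) / ((x * r₁ * c₁) * (x * r₂ * c₂)) +
          x * r₁ * c₁ / (x * r₂ * c₂) -
        (2 + 2 / (c₁ * c₂) * (t / x) - 1 / (c₁ * c₂) * (t / x) ^ 2 -
          2 * d * (1 + 1 / (2 * c₁ * c₂))) =
      c₂ / c₁ * ((r₂ - t / x) / ((1 - t / x) * r₁ * r₂) - 1 + d) -
        1 / (c₁ * c₂) * ((r₁ - t / x) * (r₂ - t / x) / (r₁ * r₂) - (1 - t / x) ^ 2) +
        c₁ / c₂ * (r₁ / r₂ - 1 + d) := by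
  have h₁ : (x * r₂ - t) * (x * c₂) ^ 2 / ((x - t) * (x * r₁ * c₁) * (x * r₂ * c₂)) =
      c₂ / c₁ * ((r₂ - t / x) / ((1 - t / x) * r₁ * r₂)) := by
    have : 1 - t / x = (x - t) / x := by field_simp
    rw [this]
    field_simp
  have h₂ : (x * r₁ - t) * (x * r₂ - t) / ((x * r₁ * c₁) * (x * r₂ * c₂)) =
      1 / (c₁ * c₂) * ((r₁ - t / x) * (r₂ - t / x) / (r₁ * r₂)) := by
    field_simp
  have h₃ : x * r₁ * c₁ / (x * r₂ * c₂) = c₁ / c₂ * (r₁ / r₂) := by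
    field_simp
  have h₄ : c₂ / c₁ + c₁ / c₂ = 2 + 1 / (c₁ * c₂) := by
    field_simp
    linarith
  have h₅ : 1 / (2 * c₁ * c₂) = 1 / (c₁ * c₂) / 2 := by
    field_simp
  have h₆ : 2 / (c₁ * c₂) = 2 * (1 / (c₁ * c₂)) := by ring
  rw [h₁, h₂, h₃, h₅, h₆]
  linear_combination (1 - d) * h₄

/-- Uniform asymptotic expansion of the Poincaré coefficient `F_n(λ)` in the critical
case `|c₁ − c₂| = 1`. -/
theorem jacobiF_uniform_expansion (α c₁ c₂ : ℝ)
    (hα : α ∈ Set.Ioo (1/3 : ℝ) (1/2)) (hc₁ : 0 < c₁) (hc₂ : 0 < c₂)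
    (hcrit : |c₁ - c₂| = 1)
    (I : Set ℝ) (hI : I ⊆ Set.Ioi 0) (hIbdd : Bornology.IsBounded I) :
    OtildeI I
      (fun n t =>
        jacobiF (jacobiWeight α c₁ c₂) (jacobiDiag α) n t -
          (2 + 2 ^ (1 - α) / (c₁ * c₂) * t * (n : ℝ) ^ (-α) -
            2 ^ (-(2 * α)) / (c₁ * c₂) * t ^ 2 * (n : ℝ) ^ (-(2 * α)) -
            α / (n : ℝ) * (1 + 1 / (2 * c₁ * c₂))))
      (fun n => (n : ℝ) ^ (-1 - α)) := by
  obtain ⟨hα₁, hα₂⟩ := hα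
  obtain ⟨M, hM⟩ := hIbdd.exists_norm_le
  set T : ℝ := max M 1
  have hT : 0 < T := lt_of_lt_of_le one_pos (le_max_right _ _)
  have hcrit' : c₁ ^ 2 + c₂ ^ 2 - 1 = 2 * c₁ * c₂ := by
    have := sq_abs (c₁ - c₂)
    rw [hcrit] at this
    linarith
  have hlim : Filter.Tendsto (fun n : ℕ => (n : ℝ) ^ α) Filter.atTop Filter.atTop :=
    (tendsto_rpow_atTop (by linarith)).comp tendsto_natCast_atTop_atTop
  obtain ⟨N, hN⟩ := Filter.eventually_atTop.1 (hlim.eventually_ge_atTop (2 * T))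
  set L : ℝ := c₂ / c₁ + 1 / (c₁ * c₂) + c₁ / c₂ with hL
  have hLpos : 0 < L := by positivity
  refine ⟨L * (7 * (1 + T)), by positivity, N, fun n hn t ht => ?_⟩
  have ht₀ : 0 < t := hI ht
  have htT : t ≤ T := (le_abs_self t).trans ((hM t ht).trans (le_max_left _ _))
  have hn₁ : (1 : ℝ) ≤ n := by exact_mod_cast (by omega : 1 ≤ n)
  have hn₀ : (0 : ℝ) < n := by linarith
  have hz : 2 * T ≤ (n : ℝ) ^ α := hN n hn.le
  have hp : 1 ≤ (2 : ℝ) ^ α := Real.one_le_rpow (by norm_num) (by linarith)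
  set y : ℝ := 1 / (2 * n) with hy
  set x : ℝ := (2 * n : ℝ) ^ α with hx
  have hxmul : x = 2 ^ α * (n : ℝ) ^ α := Real.mul_rpow (by norm_num) hn₀.le
  have hnx : (n : ℝ) ^ α ≤ x := by
    rw [hxmul]
    exact le_mul_of_one_le_left (by linarith) hp
  have hxpos : 0 < x := by linarith
  have hypos : 0 < y := by positivity
  have hy₁ : y ≤ 1 := by
    rw [hy, div_le_one (by positivity)]
    linarith
  have hq₁ : (2 * n + 1 : ℝ) ^ α = x * (1 + y) ^ α := by
    rw [hx, ← Real.mul_rpow (by positivity) (by positivity)]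
    congr 1
    rw [hy]
    field_simp
  have hq₂ : (2 * n + 2 : ℝ) ^ α = x * (1 + 2 * y) ^ α := by
    rw [hx, ← Real.mul_rpow (by positivity) (by positivity)]
    congr 1
    rw [hy]
    field_simp
  have hs : t / x ≤ 1 / 2 := by
    rw [div_le_iff₀ hxpos]
    linarith
  have hr₁ : 1 ≤ (1 + y) ^ α := Real.one_le_rpow (by linarith) (by linarith)
  have hr₂ : 1 ≤ (1 + 2 * y) ^ α := Real.one_le_rpow (by linarith) (by linarith)
  have hodd : Odd (2 * n + 1) := ⟨n, rfl⟩
  have heven : ¬ Odd (2 * n) := by simp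
  have heven' : ¬ Odd (2 * n + 2) := by
    rw [Nat.not_odd_iff_even]
    exact ⟨n + 1, by ring⟩
  have e₁ : (2 : ℝ) ^ (1 - α) / (c₁ * c₂) * t * (n : ℝ) ^ (-α) = 2 / (c₁ * c₂) * (t / x) := by
    rw [hxmul, Real.rpow_sub (by norm_num), Real.rpow_one, Real.rpow_neg hn₀.le]
    field_simp
  have e₂ : (2 : ℝ) ^ (-(2 * α)) / (c₁ * c₂) * t ^ 2 * (n : ℝ) ^ (-(2 * α)) =
      1 / (c₁ * c₂) * (t / x) ^ 2 := by
    have sq (a : ℝ) (ha : 0 ≤ a) : a ^ (-(2 * α)) = ((a ^ α) ^ 2)⁻¹ := by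
      rw [Real.rpow_neg ha, mul_comm, Real.rpow_mul ha, Real.rpow_two]
    rw [hxmul, sq 2 (by norm_num), sq n hn₀.le]
    field_simp
  have e₃ : α / (n : ℝ) = 2 * (α * y) := by
    rw [hy]
    field_simp
  have hbound := abs_poincare_remainder_le (d := α * y) hc₁ hc₂ hypos.le hy₁ (by positivity)
    (by nlinarith) (by positivity : 0 ≤ t / x) hs hr₁ hr₂
    (rpow_one_add_le_one_add_mul_self (by linarith) (by linarith) (by linarith))
    (one_add_mul_sub_sq_le_rpow (by linarith) (by linarith) hypos.le)
    ((rpow_one_add_le_one_add_mul_self (by linarith) (by linarith) (by linarith)).trans_eq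
      (by ring))
    (le_trans (le_of_eq (by ring))
      (one_add_mul_sub_sq_le_rpow (a := α) (x := 2 * y) (by linarith) (by linarith)
        (by linarith)))
  rw [← jacobiF_sub_eq_ratio hc₁ hc₂ hcrit' hxpos (by linarith) (by linarith) (by linarith)]
    at hbound
  have hF : jacobiF (jacobiWeight α c₁ c₂) (jacobiDiag α) n t =
      (x * (1 + 2 * y) ^ α - t) * (x * c₂) ^ 2 /
          ((x - t) * (x * (1 + y) ^ α * c₁) * (x * (1 + 2 * y) ^ α * c₂)) -
        (x * (1 + y) ^ α - t) * (x * (1 + 2 * y) ^ α - t) /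
          ((x * (1 + y) ^ α * c₁) * (x * (1 + 2 * y) ^ α * c₂)) +
        x * (1 + y) ^ α * c₁ / (x * (1 + 2 * y) ^ α * c₂) := by
    simp only [jacobiF, jacobiWeight, jacobiDiag, if_pos hodd, if_neg heven, if_neg heven',
      Nat.cast_add, Nat.cast_mul, Nat.cast_ofNat, Nat.cast_one, hq₁, hq₂, ← hx]
  have hh : (n : ℝ) ^ (-1 - α) = (n : ℝ)⁻¹ * ((n : ℝ) ^ α)⁻¹ := by
    rw [Real.rpow_sub hn₀, Real.rpow_neg_one, div_eq_mul_inv]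
  have hyn : y ≤ (n : ℝ)⁻¹ := by
    rw [hy, ← one_div]
    exact one_div_le_one_div_of_le hn₀ (by linarith)
  have hyα : y ≤ ((n : ℝ) ^ α)⁻¹ := by
    refine hyn.trans (inv_anti₀ (by linarith) ?_)
    exact (Real.rpow_le_rpow_of_exponent_le hn₁ (by linarith : α ≤ 1)).trans_eq
      (Real.rpow_one _)
  have hsα : t / x ≤ T * ((n : ℝ) ^ α)⁻¹ := by
    rw [← div_eq_mul_inv]
    exact div_le_div₀ hT.le htT (by linarith) hnx
  have herr : y ^ 2 + t / x * y ≤ (1 + T) * (n : ℝ) ^ (-1 - α) := by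
    calc y ^ 2 + t / x * y = y * y + t / x * y := by ring
      _ ≤ (n : ℝ)⁻¹ * ((n : ℝ) ^ α)⁻¹ + T * ((n : ℝ) ^ α)⁻¹ * (n : ℝ)⁻¹ := by gcongr
      _ = (1 + T) * (n : ℝ) ^ (-1 - α) := by
        rw [hh]
        ring
  simp only [hF, e₁, e₂, e₃]
  refine hbound.trans ?_
  rw [abs_of_nonneg (by positivity)]
  calc L * (7 * (y ^ 2 + t / x * y)) ≤ L * (7 * ((1 + T) * (n : ℝ) ^ (-1 - α))) := by gcongr
    _ = L * (7 * (1 + T)) * (n : ℝ) ^ (-1 - α) := by ring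
end

section
/- Under the same hypotheses (α ∈ (1/3,1/2), c₁,c₂ > 0, |c₁−c₂| = 1, q_n = n^α, b_n = n^α c_n with c-periodic of period 2, I a bounded interval of ℝ₊), the Poincaré coefficient G_n(λ) = (q_{2n+2}−λ)b_{2n-1}b_{2n}/((q_{2n}−λ)b_{2n+1}b_{2n+2}) satisfies the uniform expansion G_n(λ) = 1 − α/n + Õ_I(n^{-1-α}) as n → ∞. -/
/-- The Poincaré coefficient `G_n(λ)`. -/
noncomputable def jacobiG (b q : ℕ → ℝ) (n : ℕ) (t : ℝ) : ℝ :=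
  (q (2 * n + 2) - t) * b (2 * n - 1) * b (2 * n) /
    ((q (2 * n) - t) * b (2 * n + 1) * b (2 * n + 2))

/-- The factor of `G_n` that does not depend on the spectral parameter. -/
theorem abs_rpow_div_rpow_sub_le {α m : ℝ} (hα₀ : 0 < α) (hα : α < 1 / 2) (hm : 1 ≤ m) :
    |(2 * m - 1) ^ α / (2 * m + 1) ^ α - (1 - α / m)| ≤ 1 / m ^ 2 := by
  have hm₀ : 0 < m := by linarith
  have hpos : (0 : ℝ) < 2 * m - 1 := by linarith
  have hpos' : (0 : ℝ) < 2 * m + 1 := by linarith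
  have hupper : (2 * m - 1) ^ α / (2 * m + 1) ^ α ≤ 1 - 2 * α / (2 * m + 1) := by
    have hs : (-1 : ℝ) ≤ -2 / (2 * m + 1) := by
      rw [le_div_iff₀ hpos']; linarith
    have h := rpow_one_add_le_one_add_mul_self hs hα₀.le (by linarith)
    have e : 1 + -2 / (2 * m + 1) = (2 * m - 1) / (2 * m + 1) := by field_simp; ring
    rw [e, Real.div_rpow hpos.le hpos'.le] at h
    calc _ ≤ _ := h
      _ = _ := by ring
  have hlower : 1 - 2 * α / (2 * m - 1) ≤ (2 * m - 1) ^ α / (2 * m + 1) ^ α := by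
    have hs : (-1 : ℝ) ≤ 2 / (2 * m - 1) := by
      have : 0 < 2 / (2 * m - 1) := by positivity
      linarith
    have h := rpow_one_add_le_one_add_mul_self hs hα₀.le (by linarith)
    have e : 1 + 2 / (2 * m - 1) = (2 * m + 1) / (2 * m - 1) := by field_simp; ring
    have hP : 0 < (2 * m - 1) ^ α := Real.rpow_pos_of_pos hpos α
    have hQ : 0 < (2 * m + 1) ^ α := Real.rpow_pos_of_pos hpos' α
    rw [e, Real.div_rpow hpos'.le hpos.le, div_le_iff₀ hP] at h
    rw [le_div_iff₀ hQ]
    have hu : 0 ≤ 2 * α / (2 * m - 1) := by positivity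
    have hu' : α * (2 / (2 * m - 1)) = 2 * α / (2 * m - 1) := by ring
    rw [hu'] at h
    generalize 2 * α / (2 * m - 1) = u at *
    by_cases h1 : u ≤ 1
    · nlinarith [mul_le_mul_of_nonneg_left h (sub_nonneg.2 h1), mul_nonneg (sq_nonneg u) hP.le]
    · nlinarith
  have hU : 1 - 2 * α / (2 * m + 1) - (1 - α / m) ≤ 1 / m ^ 2 := by
    have e : 1 - 2 * α / (2 * m + 1) - (1 - α / m) = α / (m * (2 * m + 1)) := by
      field_simp; ring
    rw [e]
    gcongr
    · linarith
    · nlinarith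
  have hL : -(1 / m ^ 2) ≤ 1 - 2 * α / (2 * m - 1) - (1 - α / m) := by
    have e : 1 - 2 * α / (2 * m - 1) - (1 - α / m) = -(α / (m * (2 * m - 1))) := by
      field_simp; ring
    rw [e, neg_le_neg_iff]
    gcongr
    · linarith
    · nlinarith
  rw [abs_le]
  constructor <;> linarith

/-- The factor of `G_n` that depends on the spectral parameter. -/
theorem abs_shift_ratio_sub_one_le {α m t M : ℝ} (hα₀ : 0 < α) (hα : α < 1 / 2) (hm : 1 ≤ m)
    (ht : 0 < t) (htM : t ≤ M) (hM : 2 * M ≤ (2 * m) ^ α) :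
    |((2 * m + 2) ^ α - t) * (2 * m) ^ α / (((2 * m) ^ α - t) * (2 * m + 2) ^ α) - 1|
      ≤ 2 * M * m ^ (-1 - α) := by
  have hm₀ : 0 < m := by linarith
  have hS : 0 < (2 * m) ^ α := by positivity
  have hSR : (2 * m) ^ α ≤ (2 * m + 2) ^ α := by gcongr; linarith
  have hmS : m ^ α ≤ (2 * m) ^ α := by gcongr; linarith
  have hmα : 0 < m ^ α := by positivity
  have hdiff : (2 * m + 2) ^ α ≤ (2 * m) ^ α * (1 + α / m) := by
    have hs : (-1 : ℝ) ≤ 1 / m := by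
      have : 0 < 1 / m := by positivity
      linarith
    have h := rpow_one_add_le_one_add_mul_self hs hα₀.le (by linarith)
    have e : 2 * m + 2 = (2 * m) * (1 + 1 / m) := by field_simp
    rw [e, Real.mul_rpow (by positivity) (by positivity)]
    gcongr
    calc _ ≤ _ := h
      _ = _ := by ring
  have hpow : m ^ (-1 - α) = 1 / (m * m ^ α) := by
    rw [show -1 - α = -(1 + α) by ring, Real.rpow_neg hm₀.le, Real.rpow_add hm₀, Real.rpow_one,
      one_div]
  rw [hpow]
  generalize (2 * m + 2) ^ α = R at *
  generalize (2 * m) ^ α = S at *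
  generalize m ^ α = s at *
  have hSt : S / 2 ≤ S - t := by linarith
  have hSt₀ : 0 < S - t := by linarith
  have hR : 0 < R := by linarith
  have e : (R - t) * S / ((S - t) * R) - 1 = t * (R - S) / ((S - t) * R) := by
    field_simp; ring
  rw [e, abs_of_nonneg (div_nonneg (mul_nonneg ht.le (sub_nonneg.2 hSR)) (by positivity))]
  have hM₀ : 0 < M := by linarith
  calc t * (R - S) / ((S - t) * R) ≤ M * (S * (α / m)) / (S / 2 * S) := by
        gcongr
        linarith
    _ = 2 * M * α / (m * S) := by field_simp
    _ ≤ 2 * M * 1 / (m * s) := by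
        gcongr
        linarith
    _ = _ := by ring

/-- Uniform asymptotic expansion `G_n(λ) = 1 − α/n + Õ_I(n^{-1-α})` in the critical
case `|c₁ − c₂| = 1`. -/
theorem jacobiG_uniform_expansion (α c₁ c₂ : ℝ)
    (hα : α ∈ Set.Ioo (1/3 : ℝ) (1/2)) (hc₁ : 0 < c₁) (hc₂ : 0 < c₂)
    (hcrit : |c₁ - c₂| = 1)
    (I : Set ℝ) (hI : I ⊆ Set.Ioi 0) (hIbdd : Bornology.IsBounded I) :
    OtildeI I
      (fun n t =>
        jacobiG (jacobiWeight α c₁ c₂) (jacobiDiag α) n t - (1 - α / (n : ℝ)))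
      (fun n => (n : ℝ) ^ (-1 - α)) := by
  obtain ⟨hα₁, hα₂⟩ := hα
  have hα₀ : 0 < α := by linarith
  obtain ⟨K, hK⟩ := hIbdd.exists_norm_le
  set M := max K 1
  have hM₀ : 0 < M := lt_of_lt_of_le one_pos (le_max_right _ _)
  have hlim : Filter.Tendsto (fun n : ℕ => (2 * (n : ℝ)) ^ α) Filter.atTop Filter.atTop :=
    (tendsto_rpow_atTop hα₀).comp
      (tendsto_natCast_atTop_atTop.const_mul_atTop (by norm_num : (0 : ℝ) < 2))
  obtain ⟨N, hN⟩ := Filter.eventually_atTop.1 (hlim.eventually_ge_atTop (2 * M))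
  refine ⟨2 * M + 1, by positivity, N, fun n hn t htI => ?_⟩
  have hn₁ : 1 ≤ n := by omega
  have hm : (1 : ℝ) ≤ n := by exact_mod_cast hn₁
  have ht : 0 < t := hI htI
  have htM : t ≤ M := (le_abs_self t).trans ((hK t htI).trans (le_max_left _ _))
  have hnM := hN n hn.le
  have hA := abs_shift_ratio_sub_one_le hα₀ hα₂ hm ht htM hnM
  have hB := abs_rpow_div_rpow_sub_le hα₀ hα₂ hm
  have hsq : 1 / (n : ℝ) ^ 2 ≤ (n : ℝ) ^ (-1 - α) := by
    calc 1 / (n : ℝ) ^ 2 = (n : ℝ) ^ (-2 : ℝ) := by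
          rw [Real.rpow_neg (by linarith), one_div]; norm_cast
      _ ≤ _ := Real.rpow_le_rpow_of_exponent_le hm (by linarith)
  have hB₁ : |(2 * (n : ℝ) - 1) ^ α / (2 * (n : ℝ) + 1) ^ α| ≤ 1 := by
    have hP : 0 ≤ (2 * (n : ℝ) - 1) ^ α := Real.rpow_nonneg (by linarith) α
    rw [abs_of_nonneg (by positivity)]
    refine div_le_one_of_le₀ ?_ (by positivity)
    exact Real.rpow_le_rpow (by linarith) (by linarith) hα₀.le
  have hG : jacobiG (jacobiWeight α c₁ c₂) (jacobiDiag α) n t =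
      ((2 * (n : ℝ) + 2) ^ α - t) * (2 * (n : ℝ)) ^ α /
        (((2 * (n : ℝ)) ^ α - t) * (2 * (n : ℝ) + 2) ^ α) *
        ((2 * (n : ℝ) - 1) ^ α / (2 * (n : ℝ) + 1) ^ α) := by
    have o₁ : Odd (2 * n - 1) := ⟨n - 1, by omega⟩
    have o₂ : ¬ Odd (2 * n) := by simp
    have o₃ : Odd (2 * n + 1) := ⟨n, rfl⟩
    have o₄ : ¬ Odd (2 * n + 2) := by rw [Nat.not_odd_iff_even]; exact ⟨n + 1, by ring⟩
    have hcast : ((2 * n - 1 : ℕ) : ℝ) = 2 * (n : ℝ) - 1 := by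
      rw [Nat.cast_sub (by omega)]; push_cast; ring
    simp only [jacobiG, jacobiWeight, jacobiDiag, if_pos o₁, if_neg o₂, if_pos o₃, if_neg o₄,
      hcast]
    push_cast
    have hSt : (2 * (n : ℝ)) ^ α - t ≠ 0 := by linarith
    have hQ : (2 * (n : ℝ) + 1) ^ α ≠ 0 := by positivity
    have hR : (2 * (n : ℝ) + 2) ^ α ≠ 0 := by positivity
    field_simp
  have hr : 0 < (n : ℝ) ^ (-1 - α) := by positivity
  simp only [hG]
  rw [abs_of_pos hr]
  generalize ((2 * (n : ℝ) + 2) ^ α - t) * (2 * (n : ℝ)) ^ α /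
        (((2 * (n : ℝ)) ^ α - t) * (2 * (n : ℝ) + 2) ^ α) = A at *
  generalize (2 * (n : ℝ) - 1) ^ α / (2 * (n : ℝ) + 1) ^ α = B at *
  calc |A * B - (1 - α / n)| = |(A - 1) * B + (B - (1 - α / n))| := by ring_nf
    _ ≤ |A - 1| * |B| + |B - (1 - α / n)| := by
        rw [← abs_mul]; exact abs_add_le _ _
    _ ≤ 2 * M * (n : ℝ) ^ (-1 - α) * 1 + (n : ℝ) ^ (-1 - α) := by
        gcongr
        exact hB.trans hsq
    _ = _ := by ring
end

section
/- Let α ∈ (1/3, 1/2), c₁, c₂ > 0, and let I ⊂ ℝ₊ be bounded and separated from zero. Suppose the real sequence β_n(λ) satisfies the uniform expansion β_n(λ) = −(2^{1-α}/(c₁c₂))λ n^{-α} + O-terms at orders n^{-2α}, n^{-1}, n^{-3α} with λ-polynomial coefficients, plus Õ_I(n^{-1-α}). Then there exists N ∈ ℕ and solutions (X_n^±(λ))_{n≥N} of the Riccati equation X_n = (1+β_n)X_{n-1}/(X_{n-1}+1) − β_n (for n > N) with X_n^±(λ) = ±√(−β_n(λ)) + Õ_I(n^{-1}) as n → ∞.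 -/
open Filter Asymptotics Topology

namespace OtildeI

variable {I : Set ℝ} {r r' : ℕ → ℝ → ℝ} {h h' : ℕ → ℝ}

theorem add (hr : OtildeI I r h) (hr' : OtildeI I r' h) :
    OtildeI I (fun n t => r n t + r' n t) h := by
  obtain ⟨C, hC, N, H⟩ := hr
  obtain ⟨C', hC', N', H'⟩ := hr'
  refine ⟨C + C', by positivity, max N N', fun n hn t ht => ?_⟩
  have h₁ := H n (lt_of_le_of_lt (le_max_left _ _) hn) t ht
  have h₂ := H' n (lt_of_le_of_lt (le_max_right _ _) hn) t ht
  linarith [abs_add_le (r n t) (r' n t)]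

theorem sub (hr : OtildeI I r h) (hr' : OtildeI I r' h) :
    OtildeI I (fun n t => r n t - r' n t) h := by
  have hneg : OtildeI I (fun n t => -r' n t) h := by
    obtain ⟨C, hC, N, H⟩ := hr'
    exact ⟨C, hC, N, fun n hn t ht => by simpa using H n hn t ht⟩
  simpa [sub_eq_add_neg] using hr.add hneg

theorem trans_isBigO (hr : OtildeI I r h) (hh : h =O[atTop] h') : OtildeI I r h' := by
  obtain ⟨C, hC, N, H⟩ := hr
  obtain ⟨D, hD, hb⟩ := hh.exists_pos
  obtain ⟨M, hM⟩ := eventually_atTop.1 hb.bound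
  refine ⟨C * D, by positivity, max N M, fun n hn t ht => ?_⟩
  have h₁ := H n (lt_of_le_of_lt (le_max_left _ _) hn) t ht
  have h₂ := hM n ((le_max_right _ _).trans hn.le)
  simp only [Real.norm_eq_abs] at h₂
  calc |r n t| ≤ C * |h n| := h₁
    _ ≤ C * (D * |h' n|) := by gcongr
    _ = C * D * |h' n| := by ring

theorem shift (hr : OtildeI I r h) : OtildeI I (fun n => r (n - 1)) (fun n => h (n - 1)) := by
  obtain ⟨C, hC, N, H⟩ := hr
  exact ⟨C, hC, N + 1, fun n hn t ht => H (n - 1) (by omega) t ht⟩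

theorem eval_mul (hI : Bornology.IsBounded I) (P : Polynomial ℝ) {u : ℕ → ℝ}
    (hu : u =O[atTop] h) : OtildeI I (fun n t => P.eval t * u n) h := by
  obtain ⟨D, hD⟩ := hI.isCompact_closure.exists_bound_of_continuousOn P.continuous.continuousOn
  have hP : OtildeI I (fun n t => P.eval t * u n) u := by
    refine ⟨|D| + 1, by positivity, 0, fun n _ t ht => ?_⟩
    have h₁ := hD t (subset_closure ht)
    rw [abs_mul]
    gcongr
    rw [Real.norm_eq_abs] at h₁
    linarith [le_abs_self D]
  exact hP.trans_isBigO hu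

end OtildeI

theorem isBigO_natCast_rpow {p q : ℝ} (hpq : p ≤ q) :
    (fun n : ℕ => (n : ℝ) ^ p) =O[atTop] (fun n : ℕ => (n : ℝ) ^ q) := by
  refine IsBigO.of_bound 1 ?_
  filter_upwards [eventually_ge_atTop 1] with n hn
  have hn' : (1 : ℝ) ≤ n := by exact_mod_cast hn
  rw [one_mul, Real.norm_of_nonneg (by positivity), Real.norm_of_nonneg (by positivity)]
  exact Real.rpow_le_rpow_of_exponent_le hn' hpq

theorem abs_rpow_neg_succ_sub_le {p x : ℝ} (hp : 0 ≤ p) (hp2 : p ≤ 2) (hx : 1 ≤ x) :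
    |(x + 1) ^ (-p) - x ^ (-p)| ≤ 6 * (x + 1) ^ (-1 - p) := by
  have hx0 : 0 < x := by linarith
  have hmono : (x + 1) ^ (-p) ≤ x ^ (-p) :=
    Real.rpow_le_rpow_of_nonpos hx0 (by linarith) (by linarith)
  have hratio : x ^ (-p) = (x + 1) ^ (-p) * ((x + 1) / x) ^ p := by
    rw [Real.div_rpow (by positivity) hx0.le, Real.rpow_neg hx0.le,
      Real.rpow_neg (by positivity : (0 : ℝ) ≤ x + 1)]
    have h₁ : (x + 1) ^ p ≠ 0 := by positivity
    field_simp
  have hpow : ((x + 1) / x) ^ p ≤ 1 + 6 / (x + 1) := by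
    have h₁ : 1 ≤ (x + 1) / x := by rw [le_div_iff₀ hx0]; linarith
    calc ((x + 1) / x) ^ p ≤ ((x + 1) / x) ^ (2 : ℝ) :=
          Real.rpow_le_rpow_of_exponent_le h₁ hp2
      _ = ((x + 1) / x) ^ 2 := by norm_cast
      _ ≤ 1 + 6 / (x + 1) := by
        rw [div_pow, one_add_div (by positivity), div_le_div_iff₀ (by positivity) (by positivity)]
        nlinarith
  have hsplit : (x + 1) ^ (-1 - p) = (x + 1) ^ (-p) / (x + 1) := by
    rw [show -1 - p = -p - 1 by ring, Real.rpow_sub_one (by positivity)]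
  have hpos : 0 ≤ (x + 1) ^ (-p) := by positivity
  rw [abs_of_nonpos (by linarith), hsplit, hratio]
  have := mul_le_mul_of_nonneg_left hpow hpos
  calc _ ≤ (x + 1) ^ (-p) * (1 + 6 / (x + 1)) - (x + 1) ^ (-p) := by linarith
    _ = _ := by ring

theorem isBigO_natCast_rpow_sub_pred {p q : ℝ} (hp : 0 ≤ p) (hp2 : p ≤ 2) (hqp : q ≤ p) :
    (fun n : ℕ => (n : ℝ) ^ (-p) - ((n - 1 : ℕ) : ℝ) ^ (-p)) =O[atTop]
      (fun n : ℕ => (n : ℝ) ^ (-1 - q)) := by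
  refine IsBigO.trans (IsBigO.of_bound 6 ?_) (isBigO_natCast_rpow (p := -1 - p) (by linarith))
  filter_upwards [eventually_ge_atTop 2] with n hn
  obtain ⟨m, rfl⟩ : ∃ m, n = m + 1 := ⟨n - 1, by omega⟩
  have hm : (1 : ℝ) ≤ m := by exact_mod_cast (by omega : 1 ≤ m)
  rw [Real.norm_of_nonneg (by positivity : (0 : ℝ) ≤ ((m + 1 : ℕ) : ℝ) ^ (-1 - p))]
  simpa using abs_rpow_neg_succ_sub_le hp hp2 hm

theorem isBigO_pred_natCast_rpow {p : ℝ} (hp : 0 ≤ p) (hp2 : p ≤ 2) :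
    (fun n : ℕ => ((n - 1 : ℕ) : ℝ) ^ (-p)) =O[atTop] (fun n : ℕ => (n : ℝ) ^ (-p)) := by
  have h₁ := isBigO_natCast_rpow_sub_pred hp hp2 le_rfl
  have h₂ := (isBigO_refl (fun n : ℕ => (n : ℝ) ^ (-p)) atTop).sub
    (h₁.trans (isBigO_natCast_rpow (by linarith)))
  simpa using h₂

theorem abs_riccati_sub_le {s x : ℝ} (hs1 : s < 1) (hx : 0 ≤ x) :
    |(x + s ^ 2) / (x + 1) - s| ≤ (1 - s) * |x - s| := by
  have h : (x + s ^ 2) / (x + 1) - s = (1 - s) * (x - s) / (x + 1) := by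
    field_simp
    ring
  rw [h, abs_div, abs_mul, abs_of_pos (by linarith : 0 < 1 - s), abs_of_pos (by linarith : 0 < x + 1)]
  exact div_le_self (mul_nonneg (by linarith) (abs_nonneg _)) (by linarith)

/-- The solution close to the attracting fixed points `s n`. -/
theorem exists_riccati_near_attracting {s : ℕ → ℝ} {N : ℕ} {C : ℝ} (hN : 1 ≤ N) (hC : 0 ≤ C)
    (hs0 : ∀ n ≥ N, 0 < s n) (hs1 : ∀ n ≥ N, s n < 1)
    (hd : ∀ n ≥ N, |s (n + 1) - s n| ≤ C * s (n + 1) / (n + 1))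
    (hlarge : ∀ n ≥ N, 2 ≤ n * s (n + 1)) :
    ∃ X : ℕ → ℝ, (∀ n ≥ N, 0 ≤ X n ∧ X (n + 1) = (X n + s (n + 1) ^ 2) / (X n + 1)) ∧
      ∀ n ≥ N, |X n - s n| ≤ 2 * C / n := by
  let Y : ℕ → ℝ := fun k => Nat.rec (s N) (fun k y => (y + s (N + k + 1) ^ 2) / (y + 1)) k
  have hYs : ∀ k, Y (k + 1) = (Y k + s (N + k + 1) ^ 2) / (Y k + 1) := fun _ => rfl
  have hY0 : ∀ k, 0 ≤ Y k := by
    intro k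
    induction k with
    | zero => exact (hs0 N le_rfl).le
    | succ k ih => rw [hYs]; positivity
  have hY : ∀ k, |Y k - s (N + k)| ≤ 2 * C / (N + k : ℕ) := by
    intro k
    induction k with
    | zero =>
      have : Y 0 - s (N + 0) = 0 := sub_self _
      rw [this, abs_zero]
      positivity
    | succ k ih =>
      have hn : N + k ≥ N := by omega
      have hcast : (1 : ℝ) ≤ (N + k : ℕ) := by exact_mod_cast (by omega : 1 ≤ N + k)
      have h₁ := abs_riccati_sub_le (hs1 (N + k + 1) (by omega)) (hY0 k)
      have h₂ := hd (N + k) hn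
      have h₃ := hlarge (N + k) hn
      have h₄ := hs1 (N + k + 1) (by omega)
      have h₅ := hs0 (N + k + 1) (by omega)
      rw [← hYs] at h₁
      rw [show N + (k + 1) = N + k + 1 by ring]
      generalize N + k = n at *
      set σ := s (n + 1)
      push_cast
      have h₆ : |Y k - σ| ≤ 2 * C / n + C * σ / (n + 1) := by
        calc |Y k - σ| ≤ |Y k - s n| + |s n - σ| := abs_sub_le _ _ _
          _ ≤ _ := by rw [abs_sub_comm (s n)]; exact add_le_add ih h₂
      calc |Y (k + 1) - σ| ≤ (1 - σ) * |Y k - σ| := h₁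
        _ ≤ (1 - σ) * (2 * C / n + C * σ / (n + 1)) :=
          mul_le_mul_of_nonneg_left h₆ (by linarith)
        _ ≤ 2 * C / (n + 1) := by
          have hn0 : (0 : ℝ) < n := by linarith
          rw [div_add_div _ _ hn0.ne' (by positivity), mul_div_assoc', div_le_div_iff₀ (by positivity)
            (by positivity)]
          have key : (1 - σ) * (2 * (n + 1) + n * σ) ≤ 2 * n := by nlinarith
          have := mul_le_mul_of_nonneg_left key (mul_nonneg hC (by positivity : (0 : ℝ) ≤ n + 1))
          nlinarith
  refine ⟨fun n => Y (n - N), fun n hn => ⟨hY0 _, ?_⟩, fun n hn => ?_⟩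
  · have := hYs (n - N)
    rw [show N + (n - N) + 1 = n + 1 by omega, show n - N + 1 = n + 1 - N by omega] at this
    exact this
  · have := hY (n - N)
    rwa [show N + (n - N) = n by omega] at this

/-- An inverse sequence of continuous maps between nonempty compact sets has a coherent point. -/
theorem exists_backward_orbit {E : Type*} [TopologicalSpace E] [T2Space E] {J : ℕ → Set E}
    {G : ℕ → E → E} (hJ : ∀ n, IsCompact (J n)) (hne : ∀ n, (J n).Nonempty)
    (hG : ∀ n, Continuous (G n)) (hmaps : ∀ n, Set.MapsTo (G n) (J (n + 1)) (J n)) :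
    ∃ z : ℕ → E, ∀ n, z n ∈ J n ∧ z n = G n (z (n + 1)) := by
  let K : ℕ → Set (ℕ → E) := fun M => Set.univ.pi J ∩ {z | ∀ n < M, z n = G n (z (n + 1))}
  have hclosed : ∀ M, IsClosed {z : ℕ → E | ∀ n < M, z n = G n (z (n + 1))} := by
    intro M
    simp only [Set.ofPred_forall]
    exact isClosed_iInter fun n => isClosed_iInter fun _ =>
      isClosed_eq (continuous_apply n) ((hG n).comp (continuous_apply (n + 1)))
  have hcompact : ∀ M, IsCompact (K M) := fun M =>
    (isCompact_univ_pi hJ).inter_right (hclosed M)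
  have hK : ∀ M, (K M).Nonempty := by
    choose e he using hne
    have hfin : ∀ M, ∀ w ∈ Set.univ.pi J,
        ∃ z ∈ K M, ∀ n ≥ M, z n = w n := by
      intro M
      induction M with
      | zero => exact fun w hw => ⟨w, ⟨hw, by simp⟩, fun _ _ => rfl⟩
      | succ M ih =>
        intro w hw
        have hw' : Function.update w M (G M (w (M + 1))) ∈ Set.univ.pi J := by
          intro n _
          by_cases hn : n = M
          · subst hn
            simpa using hmaps n (hw (n + 1) trivial)
          · simpa [hn] using hw n trivial
        obtain ⟨z, hz, hzw⟩ := ih _ hw'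
        refine ⟨z, ⟨hz.1, fun n hn => ?_⟩, fun n hn => ?_⟩
        · rcases Nat.lt_succ_iff_lt_or_eq.1 hn with hlt | rfl
          · exact hz.2 n hlt
          · rw [hzw n le_rfl, hzw (n + 1) (by omega)]
            simp
        · rw [hzw n (by omega), Function.update_of_ne (by omega)]
    intro M
    obtain ⟨z, hz, -⟩ := hfin M e fun n _ => he n
    exact ⟨z, hz⟩
  obtain ⟨z, hz⟩ := IsCompact.nonempty_iInter_of_sequence_nonempty_isCompact_isClosed K
    (fun M z hz => ⟨hz.1, fun n hn => hz.2 n (hn.trans M.lt_succ_self)⟩) hK (hcompact 0)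
    fun M => (isClosed_set_pi fun n _ => (hJ n).isClosed).inter (hclosed M)
  rw [Set.mem_iInter] at hz
  exact ⟨z, fun n => ⟨(hz 0).1 n trivial, (hz (n + 1)).2 n n.lt_succ_self⟩⟩

/-- The solution close to the repelling fixed points `-s n`, up to sign. -/
theorem exists_riccati_near_repelling {s : ℕ → ℝ} {N : ℕ} {C : ℝ} (hN : 1 ≤ N) (hC : 0 ≤ C)
    (hs0 : ∀ n ≥ N, 0 < s n) (hs1 : ∀ n ≥ N, s n < 1)
    (hd : ∀ n ≥ N, |s (n + 1) - s n| ≤ C * s (n + 1) / (n + 1)) :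
    ∃ Z : ℕ → ℝ, (∀ n ≥ N, 0 ≤ Z (n + 1) ∧
        Z n = (Z (n + 1) + s (n + 1) ^ 2) / (Z (n + 1) + 1)) ∧
      ∀ n ≥ N, |Z n - s n| ≤ C / n := by
  let J : ℕ → Set ℝ := fun k => Set.Ici 0 ∩ Metric.closedBall (s (N + k)) (C / (N + k : ℕ))
  let G : ℕ → ℝ → ℝ := fun k z => (|z| + s (N + k + 1) ^ 2) / (|z| + 1)
  obtain ⟨z, hz⟩ := exists_backward_orbit (J := J) (G := G)
    (fun k => (isCompact_closedBall _ _).inter_left isClosed_Ici)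
    (fun k => ⟨s (N + k), (hs0 _ (by omega)).le, Metric.mem_closedBall_self (by positivity)⟩)
    (fun k => by
      refine Continuous.div (by fun_prop) (by fun_prop) fun x => ?_
      positivity)
    (by
      rintro k z ⟨hz0, hz⟩
      rw [Set.mem_Ici] at hz0
      refine ⟨by simp only [G, Set.mem_Ici]; positivity, ?_⟩
      rw [Metric.mem_closedBall, Real.dist_eq] at hz ⊢
      simp only [G, abs_of_nonneg hz0]
      have hn : (1 : ℝ) ≤ (N + k : ℕ) := by exact_mod_cast (by omega : 1 ≤ N + k)
      have h₁ := abs_riccati_sub_le (hs1 (N + k + 1) (by omega)) hz0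
      have h₂ := hd (N + k) (by omega)
      have h₃ := hs1 (N + k + 1) (by omega)
      rw [show N + (k + 1) = N + k + 1 by ring] at hz
      generalize N + k = n at *
      push_cast at hz
      set σ := s (n + 1)
      calc |(z + σ ^ 2) / (z + 1) - s n|
          ≤ |(z + σ ^ 2) / (z + 1) - σ| + |σ - s n| := abs_sub_le _ _ _
        _ ≤ (1 - σ) * (C / (n + 1)) + C * σ / (n + 1) :=
          add_le_add (h₁.trans (mul_le_mul_of_nonneg_left hz (by linarith))) h₂
        _ = C / (n + 1) := by ring
        _ ≤ C / n := by gcongr; linarith)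
  refine ⟨fun n => z (n - N), fun n hn => ?_, fun n hn => ?_⟩
  · have h₁ := (hz (n - N)).2
    have h₀ : 0 ≤ z (n - N + 1) := (hz (n - N + 1)).1.1
    simp only [G, abs_of_nonneg h₀] at h₁
    rw [show N + (n - N) + 1 = n + 1 by omega, show n - N + 1 = n + 1 - N by omega] at h₁
    rw [show n - N + 1 = n + 1 - N by omega] at h₀
    exact ⟨h₀, h₁⟩
  · have h₁ := (hz (n - N)).1.2
    rw [Metric.mem_closedBall, Real.dist_eq, show N + (n - N) = n by omega] at h₁
    exact h₁

theorem abs_sqrt_sub_sqrt_le {a b D : ℝ} (hb : 0 < b) (ha : 0 ≤ a) (h : |b - a| ≤ D * b) :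
    |√b - √a| ≤ D * √b := by
  have hb' := Real.sqrt_pos.2 hb
  have hprod : |√b - √a| * (√b + √a) = |b - a| := by
    rw [← abs_of_nonneg (by positivity : 0 ≤ √b + √a), ← abs_mul]
    congr 1
    nlinarith [Real.sq_sqrt hb.le, Real.sq_sqrt ha]
  have : |√b - √a| * √b ≤ D * √b * √b := by
    calc _ ≤ |√b - √a| * (√b + √a) := by
          gcongr
          linarith [Real.sqrt_nonneg a]
      _ ≤ D * b := hprod.trans_le h
      _ = D * √b * √b := by rw [mul_assoc, Real.mul_self_sqrt hb.le]
  exact le_of_mul_le_mul_right this hb'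

theorem exists_riccati_solutions_near_sqrt {I : Set ℝ} {α c C : ℝ} {β : ℕ → ℝ → ℝ} {N : ℕ}
    (hN : 1 ≤ N) (hc : 0 < c) (hC : 0 < C)
    (hlower : ∀ n ≥ N, ∀ t ∈ I, c * (n : ℝ) ^ (-α) ≤ -β n t)
    (hupper : ∀ n ≥ N, ∀ t ∈ I, -β n t < 1)
    (hdiff : ∀ n ≥ N, ∀ t ∈ I,
      |β (n + 1) t - β n t| ≤ C * ((n + 1 : ℕ) : ℝ) ^ (-1 - α))
    (hlarge : ∀ n ≥ N, 2 ≤ n * (c * ((n + 1 : ℕ) : ℝ) ^ (-α))) :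
    ∃ Xp Xm : ℕ → ℝ → ℝ,
      (∀ t ∈ I, ∀ n > N,
        Xp n t = (1 + β n t) * Xp (n - 1) t / (Xp (n - 1) t + 1) - β n t ∧
        Xm n t = (1 + β n t) * Xm (n - 1) t / (Xm (n - 1) t + 1) - β n t) ∧
      OtildeI I (fun n t => Xp n t - Real.sqrt (-β n t)) (fun n => (n : ℝ)⁻¹) ∧
      OtildeI I (fun n t => Xm n t + Real.sqrt (-β n t)) (fun n => (n : ℝ)⁻¹) := by
  have hpoint : ∀ t, ∃ X Z : ℕ → ℝ, t ∈ I →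
      ((∀ n ≥ N, 0 ≤ X n ∧ X (n + 1) = (X n + -β (n + 1) t) / (X n + 1)) ∧
        ∀ n ≥ N, |X n - √(-β n t)| ≤ 2 * (C / c) / n) ∧
      ((∀ n ≥ N, 0 ≤ Z (n + 1) ∧ Z n = (Z (n + 1) + -β (n + 1) t) / (Z (n + 1) + 1)) ∧
        ∀ n ≥ N, |Z n - √(-β n t)| ≤ C / c / n) := by
    intro t
    by_cases ht : t ∈ I
    swap
    · exact ⟨0, 0, fun h => absurd h ht⟩
    have hbpos : ∀ n ≥ N, 0 < -β n t := fun n hn => by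
      have : (0 : ℝ) < n := by exact_mod_cast (by omega : 0 < n)
      exact lt_of_lt_of_le (by positivity) (hlower n hn t ht)
    have hs0 : ∀ n ≥ N, 0 < √(-β n t) := fun n hn => Real.sqrt_pos.2 (hbpos n hn)
    have hs1 : ∀ n ≥ N, √(-β n t) < 1 := fun n hn => by
      rw [Real.sqrt_lt' one_pos]
      simpa using hupper n hn t ht
    have hd : ∀ n ≥ N, |√(-β (n + 1) t) - √(-β n t)| ≤
        C / c * √(-β (n + 1) t) / (n + 1) := fun n hn => by
      have h₁ := hlower (n + 1) (by omega) t ht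
      have hpow : ((n + 1 : ℕ) : ℝ) ^ (-1 - α) = ((n + 1 : ℕ) : ℝ) ^ (-α) / (n + 1) := by
        rw [show -1 - α = -α - 1 by ring, Real.rpow_sub_one (by positivity)]
        push_cast
        rfl
      have h₂ : |-β (n + 1) t - -β n t| ≤ C / c / (n + 1) * -β (n + 1) t := by
        calc |-β (n + 1) t - -β n t| = |β (n + 1) t - β n t| := by
              rw [← abs_neg]
              congr 1
              ring
          _ ≤ C * ((n + 1 : ℕ) : ℝ) ^ (-1 - α) := hdiff n hn t ht
          _ = C / c / (n + 1) * (c * ((n + 1 : ℕ) : ℝ) ^ (-α)) := by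
              rw [hpow]
              field_simp
          _ ≤ C / c / (n + 1) * -β (n + 1) t := by gcongr
      refine (abs_sqrt_sub_sqrt_le (hbpos _ (by omega)) (hbpos n hn).le h₂).trans_eq ?_
      ring
    have hl : ∀ n ≥ N, 2 ≤ n * √(-β (n + 1) t) := fun n hn => by
      have h₁ := hlower (n + 1) (by omega) t ht
      have h₂ : -β (n + 1) t ≤ √(-β (n + 1) t) :=
        Real.le_sqrt_of_sq_le (by nlinarith [hbpos (n + 1) (by omega), hupper (n + 1) (by omega) t ht])
      calc 2 ≤ n * (c * ((n + 1 : ℕ) : ℝ) ^ (-α)) := hlarge n hn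
        _ ≤ n * √(-β (n + 1) t) := by gcongr; exact h₁.trans h₂
    obtain ⟨X, hX, hX'⟩ := exists_riccati_near_attracting hN (by positivity) hs0 hs1 hd hl
    obtain ⟨Z, hZ, hZ'⟩ := exists_riccati_near_repelling hN (by positivity) hs0 hs1 hd
    refine ⟨X, Z, fun _ => ⟨⟨fun n hn => ⟨(hX n hn).1, ?_⟩, hX'⟩,
      ⟨fun n hn => ⟨(hZ n hn).1, ?_⟩, hZ'⟩⟩⟩
    · simpa only [Real.sq_sqrt (hbpos (n + 1) (by omega)).le] using (hX n hn).2
    · simpa only [Real.sq_sqrt (hbpos (n + 1) (by omega)).le] using (hZ n hn).2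
  choose X Z hXZ using hpoint
  refine ⟨fun n t => X t n, fun n t => -Z t n, fun t ht n hn => ?_,
    ⟨2 * (C / c), by positivity, N, fun n hn t ht => ?_⟩,
    ⟨C / c, by positivity, N, fun n hn t ht => ?_⟩⟩
  · obtain ⟨⟨hX, -⟩, hZ, -⟩ := hXZ t ht
    obtain ⟨m, rfl⟩ : ∃ m, n = m + 1 := ⟨n - 1, by omega⟩
    obtain ⟨hX0, hX⟩ := hX m (by omega)
    obtain ⟨hZ0, hZ⟩ := hZ m (by omega)
    have hb := hupper (m + 1) (by omega) t ht
    simp only [Nat.add_sub_cancel]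
    constructor
    · rw [hX]
      field_simp
      ring
    · have hne : -Z t m + 1 = (1 + β (m + 1) t) / (Z t (m + 1) + 1) := by
        rw [hZ]
        field_simp
        ring
      have h₁ : 1 + β (m + 1) t ≠ 0 := by linarith
      rw [hne, hZ]
      field_simp
      ring
  · have := (hXZ t ht).1.2 n hn.le
    rwa [abs_of_nonneg (by positivity : (0 : ℝ) ≤ (n : ℝ)⁻¹), ← div_eq_mul_inv]
  · have := (hXZ t ht).2.2 n hn.le
    rw [abs_of_nonneg (by positivity : (0 : ℝ) ≤ (n : ℝ)⁻¹), ← div_eq_mul_inv, ← abs_neg]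
    simpa [sub_eq_add_neg, add_comm] using this

/-- Uniform asymptotics of two solutions of the Riccati equation:
`X_n^±(λ) = ±√(−β_n(λ)) + Õ_I(n^{-1})`. -/
theorem riccati_uniform_solution_asymptotics (α c₁ c₂ : ℝ)
    (hα : α ∈ Set.Ioo (1/3 : ℝ) (1/2)) (hc₁ : 0 < c₁) (hc₂ : 0 < c₂)
    (I : Set ℝ) (hIbdd : Bornology.IsBounded I)
    (hIpos : ∃ δ > (0 : ℝ), ∀ t ∈ I, δ ≤ t)
    (β : ℕ → ℝ → ℝ) (P₂ P₁ P₃ : Polynomial ℝ)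
    (hβ : OtildeI I
      (fun n t => β n t -
        (-(2 ^ (1 - α) / (c₁ * c₂)) * t * (n : ℝ) ^ (-α) +
          P₂.eval t * (n : ℝ) ^ (-(2 * α)) + P₁.eval t * (n : ℝ)⁻¹ +
          P₃.eval t * (n : ℝ) ^ (-(3 * α))))
      (fun n => (n : ℝ) ^ (-1 - α))) :
    ∃ N : ℕ, ∃ Xp Xm : ℕ → ℝ → ℝ,
      (∀ t ∈ I, ∀ n > N,
        Xp n t = (1 + β n t) * Xp (n - 1) t / (Xp (n - 1) t + 1) - β n t ∧
        Xm n t = (1 + β n t) * Xm (n - 1) t / (Xm (n - 1) t + 1) - β n t) ∧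
      OtildeI I (fun n t => Xp n t - Real.sqrt (-β n t)) (fun n => (n : ℝ)⁻¹) ∧
      OtildeI I (fun n t => Xm n t + Real.sqrt (-β n t)) (fun n => (n : ℝ)⁻¹) := by
  obtain ⟨hα₁, hα₂⟩ := hα
  obtain ⟨δ, hδ, hδI⟩ := hIpos
  set A : ℝ := 2 ^ (1 - α) / (c₁ * c₂)
  have hApos : 0 < A := by positivity
  have hinv : ∀ n : ℕ, (n : ℝ)⁻¹ = (n : ℝ) ^ (-(1 : ℝ)) := fun n => (Real.rpow_neg_one _).symm
  have hdiff : OtildeI I (fun n t => β n t - β (n - 1) t) (fun n => (n : ℝ) ^ (-1 - α)) := by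
    have hshift := hβ.shift.trans_isBigO (h' := fun n => (n : ℝ) ^ (-1 - α)) (by
      have h := isBigO_pred_natCast_rpow (p := 1 + α) (by linarith) (by linarith)
      rwa [show -(1 + α) = -1 - α by ring] at h)
    have hterm : ∀ (P : Polynomial ℝ) (p : ℝ), α ≤ p → p ≤ 2 →
        OtildeI I (fun n t => P.eval t * ((n : ℝ) ^ (-p) - ((n - 1 : ℕ) : ℝ) ^ (-p)))
          (fun n => (n : ℝ) ^ (-1 - α)) := fun P p hp hp2 =>
      OtildeI.eval_mul hIbdd P (isBigO_natCast_rpow_sub_pred (by linarith) hp2 hp)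
    convert (hβ.sub hshift).add <|
      (hterm (Polynomial.C (-A) * Polynomial.X) α le_rfl (by linarith)).add <|
      (hterm P₂ (2 * α) (by linarith) (by linarith)).add <|
      (hterm P₁ 1 (by linarith) (by linarith)).add
      (hterm P₃ (3 * α) (by linarith) (by linarith)) using 3 with n t
    simp only [hinv, Polynomial.eval_mul, Polynomial.eval_C, Polynomial.eval_X]
    ring
  have hlead : OtildeI I (fun n t => β n t + A * t * (n : ℝ) ^ (-α))
      (fun n => (n : ℝ) ^ (-(2 * α))) := by
    have hterm : ∀ (P : Polynomial ℝ) (p : ℝ), 2 * α ≤ p →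
        OtildeI I (fun n t => P.eval t * (n : ℝ) ^ (-p)) (fun n => (n : ℝ) ^ (-(2 * α))) :=
      fun P p hp => OtildeI.eval_mul hIbdd P (isBigO_natCast_rpow (by linarith))
    convert (hβ.trans_isBigO (isBigO_natCast_rpow (by linarith))).add <|
      (hterm P₂ (2 * α) le_rfl).add <| (hterm P₁ 1 (by linarith)).add
      (hterm P₃ (3 * α) (by linarith)) using 3 with n t
    simp only [hinv]
    ring
  obtain ⟨C, hC, N₁, hdiff⟩ := hdiff
  obtain ⟨D, hD, N₂, hlead⟩ := hlead
  obtain ⟨R, hR⟩ := hIbdd.exists_norm_le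
  have hzero : Tendsto (fun n : ℕ => (n : ℝ) ^ (-α)) atTop (𝓝 0) :=
    (tendsto_rpow_neg_atTop (by linarith)).comp tendsto_natCast_atTop_atTop
  have hinfty : Tendsto (fun n : ℕ => ((n + 1 : ℕ) : ℝ) ^ (1 - α)) atTop atTop :=
    ((tendsto_rpow_atTop (by linarith)).comp tendsto_natCast_atTop_atTop).comp
      (tendsto_add_atTop_nat 1)
  have hsmall₁ : ∀ᶠ n : ℕ in atTop, D * (n : ℝ) ^ (-α) < A * δ / 2 := by
    have := hzero.const_mul D
    rw [mul_zero] at this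
    exact this.eventually_lt_const (by positivity)
  have hsmall₂ : ∀ᶠ n : ℕ in atTop, (A * R + A * δ / 2) * (n : ℝ) ^ (-α) < 1 := by
    have := hzero.const_mul (A * R + A * δ / 2)
    rw [mul_zero] at this
    exact this.eventually_lt_const one_pos
  obtain ⟨N₃, hN₃⟩ := eventually_atTop.1 (hsmall₁.and (hsmall₂.and
    (hinfty.eventually_ge_atTop (4 / (A * δ / 2)))))
  have hbounds : ∀ n ≥ N₁ + N₂ + N₃ + 1, ∀ t ∈ I,
      A * δ / 2 * (n : ℝ) ^ (-α) ≤ -β n t ∧ -β n t < 1 := by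
    intro n hn t ht
    obtain ⟨h₁, h₂, -⟩ := hN₃ n (by omega)
    have h₃ := hlead n (by omega) t ht
    dsimp only at h₃
    have hn0 : (0 : ℝ) < n := by exact_mod_cast (by omega : 0 < n)
    have hu : 0 < (n : ℝ) ^ (-α) := by positivity
    rw [abs_of_pos (by positivity : 0 < (n : ℝ) ^ (-(2 * α))), show -(2 * α) = -α + -α by ring, Real.rpow_add hn0] at h₃
    have h₄ : D * ((n : ℝ) ^ (-α) * (n : ℝ) ^ (-α)) ≤ A * δ / 2 * (n : ℝ) ^ (-α) := by
      rw [← mul_assoc]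
      gcongr
    obtain ⟨h₅, h₆⟩ := abs_le.1 (h₃.trans h₄)
    have h₇ : A * δ * (n : ℝ) ^ (-α) ≤ A * t * (n : ℝ) ^ (-α) := by
      gcongr
      exact hδI t ht
    have h₈ : A * t * (n : ℝ) ^ (-α) ≤ A * R * (n : ℝ) ^ (-α) := by
      gcongr
      exact (le_abs_self t).trans (hR t ht)
    constructor <;> linarith
  refine ⟨N₁ + N₂ + N₃ + 1, exists_riccati_solutions_near_sqrt (α := α) (c := A * δ / 2) (C := C)
    (by omega) (by positivity) hC (fun n hn t ht => (hbounds n hn t ht).1)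
    (fun n hn t ht => (hbounds n hn t ht).2) (fun n hn t ht => ?_) fun n hn => ?_⟩
  · have h₁ := hdiff (n + 1) (by omega) t ht
    dsimp only at h₁
    rwa [abs_of_pos (by positivity : 0 < ((n + 1 : ℕ) : ℝ) ^ (-1 - α))] at h₁
  · have h₁ := (hN₃ n (by omega)).2.2
    have hn1 : (1 : ℝ) ≤ n := by exact_mod_cast (by omega : 1 ≤ n)
    rw [div_le_iff₀ (by positivity), show 1 - α = -α + 1 by ring,
      Real.rpow_add_one (by positivity)] at h₁
    push_cast at h₁ ⊢
    have hu : 0 ≤ A * δ / 2 * ((n : ℝ) + 1) ^ (-α) := by positivity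
    nlinarith
end
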